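/- Under reach value invisibility, the LSTS underlying a Petri net is not necessarily labelled consistently for polynomial propositions: there exist a Petri net, a labelling L_p of its markings by a single polynomial proposition, and two initial paths π and π' that are weakly equivalent with respect to the set of reach value invisible structural transitions but not stutter equivalent under L_p. -/

import Mathlib

open scoped Classical

/-- The subsequence of an `Option`-valued sequence consisting of the values at the
indices satisfying `P`, in increasing order (`none` past the end when only finitely
many indices satisfy `P`). -/
noncomputable def subseq {α : Type*} (g : ℕ → Option α) (P : ℕ → Prop) : ℕ → Option α :=
  fun k => if {i | P i}.Infinite ∨ k < {i | P i}.ncard then g (Nat.nth P k) else none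

/-- The no-stutter trace of a sequence of labels (`none` marking positions past the end
of a finite sequence): the subsequence of those values at indices `i` such that `i = 0`
or the value differs from the one at `i - 1`. -/
noncomputable def nsTrace {α : Type*} (g : ℕ → Option α) : ℕ → Option α :=
  subseq g fun i => (g i).isSome ∧ (i = 0 ∨ g i ≠ g (i - 1))

/-- A (finite or infinite) path of a transition relation `Tr`.  `len` is the number of
transitions (`⊤` for an infinite path); the values of `states` and `acts` beyond the
length are irrelevant junk. -/
structure TPath {S : Type*} {A : Type*} (Tr : S → A → S → Prop) where
  states : ℕ → S
  acts : ℕ → A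
  len : ℕ∞
  valid : ∀ i : ℕ, (i : ℕ∞) < len → Tr (states i) (acts i) (states (i + 1))

/-- The sequence of state labels along a path (`none` beyond the end). -/
noncomputable def TPath.labelSeq {S A l : Type*}
    {Tr : S → A → S → Prop} (p : TPath Tr) (L : S → Set l) : ℕ → Option (Set l) :=
  fun i => if (i : ℕ∞) ≤ p.len then some (L (p.states i)) else none

/-- The sequence of actions along a path (`none` beyond the end). -/
noncomputable def TPath.actSeq {S A : Type*}
    {Tr : S → A → S → Prop} (p : TPath Tr) : ℕ → Option A :=
  fun i => if (i : ℕ∞) < p.len then some (p.acts i) else none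

/-- Stutter equivalence of two paths with respect to labellings `L₁`, `L₂`:
both are finite or both are infinite, and they have the same no-stutter trace. -/
def StutterEquiv {S₁ A₁ S₂ A₂ l : Type*}
    {Tr₁ : S₁ → A₁ → S₁ → Prop} {Tr₂ : S₂ → A₂ → S₂ → Prop}
    (L₁ : S₁ → Set l) (L₂ : S₂ → Set l) (p : TPath Tr₁) (q : TPath Tr₂) : Prop :=
  (p.len = ⊤ ↔ q.len = ⊤) ∧ nsTrace (p.labelSeq L₁) = nsTrace (q.labelSeq L₂)

/-- Weak equivalence of two paths with respect to a set `I` of invisible actions: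
both are finite or both are infinite, and the projections of their action sequences
onto the visible actions (those not in `I`) are equal. -/
def WeakEquiv {S₁ S₂ A : Type*}
    {Tr₁ : S₁ → A → S₁ → Prop} {Tr₂ : S₂ → A → S₂ → Prop}
    (I : Set A) (p : TPath Tr₁) (q : TPath Tr₂) : Prop :=
  (p.len = ⊤ ↔ q.len = ⊤) ∧
    subseq p.actSeq (fun i => (i : ℕ∞) < p.len ∧ p.acts i ∉ I) =
      subseq q.actSeq (fun i => (i : ℕ∞) < q.len ∧ q.acts i ∉ I)

/-- A finite run of length `n` along `Tr`: `σ 0 -α 0→ σ 1 -α 1→ ⋯ -α (n-1)→ σ n`. -/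
def FinRun {S A : Type*} (Tr : S → A → S → Prop) (n : ℕ) (σ : ℕ → S) (α : ℕ → A) : Prop :=
  ∀ i < n, Tr (σ i) (α i) (σ (i + 1))

/-- `a` is a key action in `s` w.r.t. the reduction function `r`: for all
`a₁, …, aₙ ∉ r s` and paths `s -a₁…aₙ→ s'`, the action `a` is enabled in `s'`. -/
def KeyAction {S A : Type*} (Tr : S → A → S → Prop) (r : S → Set A) (s : S) (a : A) : Prop :=
  ∀ (n : ℕ) (σ : ℕ → S) (α : ℕ → A), σ 0 = s → FinRun Tr n σ α →
    (∀ i < n, α i ∉ r s) → ∃ t, Tr (σ n) a t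

/-- Condition D0: if some action is enabled in `s`, then `r s` contains an enabled action. -/
def CondD0 {S A : Type*} (Tr : S → A → S → Prop) (r : S → Set A) (s : S) : Prop :=
  (∃ a t, Tr s a t) → ∃ a ∈ r s, ∃ t, Tr s a t

/-- Condition D1. -/
def CondD1 {S A : Type*} (Tr : S → A → S → Prop) (r : S → Set A) (s : S) : Prop :=
  ∀ a ∈ r s, ∀ (n : ℕ) (σ : ℕ → S) (α : ℕ → A) (sn' : S),
    σ 0 = s → FinRun Tr n σ α → (∀ i < n, α i ∉ r s) → Tr (σ n) a sn' →
    ∃ σ' : ℕ → S, Tr s a (σ' 0) ∧ FinRun Tr n σ' α ∧ σ' n = sn'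

/-- Condition D1' (strengthened D1): additionally, if `a` is invisible then
`sᵢ -a→ s'ᵢ` for every `1 ≤ i < n`. -/
def CondD1' {S A : Type*} (Tr : S → A → S → Prop) (I : Set A) (r : S → Set A) (s : S) : Prop :=
  ∀ a ∈ r s, ∀ (n : ℕ) (σ : ℕ → S) (α : ℕ → A) (sn' : S),
    σ 0 = s → FinRun Tr n σ α → (∀ i < n, α i ∉ r s) → Tr (σ n) a sn' →
    ∃ σ' : ℕ → S, Tr s a (σ' 0) ∧ FinRun Tr n σ' α ∧ σ' n = sn' ∧
      (a ∈ I → ∀ i, 1 ≤ i → i < n → Tr (σ i) a (σ' i))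

/-- Condition D2: every enabled action of `r s` is a key action in `s`. -/
def CondD2 {S A : Type*} (Tr : S → A → S → Prop) (r : S → Set A) (s : S) : Prop :=
  ∀ a ∈ r s, (∃ t, Tr s a t) → KeyAction Tr r s a

/-- Condition D2w: if some action is enabled in `s`, then `r s` contains a key action. -/
def CondD2w {S A : Type*} (Tr : S → A → S → Prop) (r : S → Set A) (s : S) : Prop :=
  (∃ a t, Tr s a t) → ∃ a ∈ r s, KeyAction Tr r s a

/-- Condition V: if `r s` contains an enabled visible action, it contains all visible
actions. -/
def CondV {S A : Type*} (Tr : S → A → S → Prop) (I : Set A) (r : S → Set A) (s : S) : Prop :=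
  (∃ a ∈ r s, a ∉ I ∧ ∃ t, Tr s a t) → ∀ a, a ∉ I → a ∈ r s

/-- Condition I: if an invisible action is enabled in `s`, then `r s` contains an
invisible key action. -/
def CondI {S A : Type*} (Tr : S → A → S → Prop) (I : Set A) (r : S → Set A) (s : S) : Prop :=
  (∃ a ∈ I, ∃ t, Tr s a t) → ∃ a ∈ r s, a ∈ I ∧ KeyAction Tr r s a

/-- The states of the reduced LSTS: the smallest set of states containing the initial
state `s0` and closed under transitions labelled with actions of the stubborn set. -/
inductive RedReach {S A : Type*} (Tr : S → A → S → Prop) (r : S → Set A) (s0 : S) : S → Prop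
  | refl : RedReach Tr r s0 s0
  | step {s a t} : RedReach Tr r s0 s → a ∈ r s → Tr s a t → RedReach Tr r s0 t

/-- The transition relation of the reduced LSTS. -/
def RedTr {S A : Type*} (Tr : S → A → S → Prop) (r : S → Set A) (s0 : S) :
    S → A → S → Prop :=
  fun s a t => RedReach Tr r s0 s ∧ a ∈ r s ∧ Tr s a t

/-- Condition L: for every visible action `a`, every cycle in the reduced LSTS
contains a state `s` with `a ∈ r s`. -/
def CondL {S A : Type*} (Tr : S → A → S → Prop) (I : Set A) (r : S → Set A) (s0 : S) : Prop :=
  ∀ a ∉ I, ∀ (n : ℕ) (σ : ℕ → S) (α : ℕ → A), 0 < n →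
    FinRun (RedTr Tr r s0) n σ α → σ n = σ 0 → ∃ i < n, a ∈ r (σ i)

/-- Condition C4: either `r s` consists of all actions, or `r s` contains precisely one
enabled action. -/
def CondC4 {S A : Type*} (Tr : S → A → S → Prop) (r : S → Set A) (s : S) : Prop :=
  r s = Set.univ ∨ ∃! a, a ∈ r s ∧ ∃ t, Tr s a t

/-- `I` is a set of invisible actions w.r.t. the labelling `L`. -/
def InvisibleSet {S A l : Type*} (Tr : S → A → S → Prop) (L : S → Set l) (I : Set A) : Prop :=
  ∀ a ∈ I, ∀ s t, Tr s a t → L s = L t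

/-- Reachability along `Tr`. -/
inductive Reach {S A : Type*} (Tr : S → A → S → Prop) (s0 : S) : S → Prop
  | refl : Reach Tr s0 s0
  | step {s a t} : Reach Tr s0 s → Tr s a t → Reach Tr s0 t

/-- Stutter-trace equivalence of two systems: for every initial path of the one there
is a stutter equivalent initial path of the other, and vice versa. -/
def StutterTraceEquiv {S₁ A₁ S₂ A₂ l : Type*} (Tr₁ : S₁ → A₁ → S₁ → Prop) (i₁ : S₁)
    (L₁ : S₁ → Set l) (Tr₂ : S₂ → A₂ → S₂ → Prop) (i₂ : S₂) (L₂ : S₂ → Set l) : Prop :=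
  (∀ p : TPath Tr₁, p.states 0 = i₁ →
      ∃ q : TPath Tr₂, q.states 0 = i₂ ∧ StutterEquiv L₁ L₂ p q) ∧
  (∀ q : TPath Tr₂, q.states 0 = i₂ →
      ∃ p : TPath Tr₁, p.states 0 = i₁ ∧ StutterEquiv L₁ L₂ p q)

/-- Weak-trace equivalence of two systems with the same set `I` of invisible actions. -/
def WeakTraceEquiv {S₁ S₂ A : Type*} (Tr₁ : S₁ → A → S₁ → Prop) (i₁ : S₁)
    (Tr₂ : S₂ → A → S₂ → Prop) (i₂ : S₂) (I : Set A) : Prop :=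
  (∀ p : TPath Tr₁, p.states 0 = i₁ → ∃ q : TPath Tr₂, q.states 0 = i₂ ∧ WeakEquiv I p q) ∧
  (∀ q : TPath Tr₂, q.states 0 = i₂ → ∃ p : TPath Tr₁, p.states 0 = i₁ ∧ WeakEquiv I p q)

/-- An LSTS is labelled consistently iff any two weakly equivalent paths starting in a
common state are stutter equivalent. -/
def LabelledConsistently {S A l : Type*} (Tr : S → A → S → Prop) (L : S → Set l)
    (I : Set A) : Prop :=
  ∀ p q : TPath Tr, p.states 0 = q.states 0 → WeakEquiv I p q → StutterEquiv L L p q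

/-- Label sequence of an explicitly given finite run with `n` transitions. -/
noncomputable def finLabelSeq {S l : Type*} (L : S → Set l) (n : ℕ) (σ : ℕ → S) :
    ℕ → Option (Set l) :=
  fun i => if i ≤ n then some (L (σ i)) else none

/-- Stutter equivalence of two explicitly given finite runs (with `n`, resp. `m`,
transitions); both are finite, so it only requires equality of no-stutter traces. -/
def FinStutterEquiv {S l : Type*} (L : S → Set l) (n : ℕ) (σ : ℕ → S) (m : ℕ)
    (τ : ℕ → S) : Prop :=
  nsTrace (finLabelSeq L n σ) = nsTrace (finLabelSeq L m τ)

/-- Stutter equivalence of two explicitly given infinite runs; both are infinite, so it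
only requires equality of no-stutter traces. -/
def InfStutterEquiv {S l : Type*} (L : S → Set l) (σ τ : ℕ → S) : Prop :=
  nsTrace (fun i => some (L (σ i))) = nsTrace (fun i => some (L (τ i)))

/-- A Petri net over places `P` and structural transitions `T`:
`pre p t = W(p,t)`, `post t p = W(t,p)`, and initial marking `m0`. -/
structure PetriNet (P T : Type*) where
  pre : P → T → ℕ
  post : T → P → ℕ
  m0 : P → ℕ

/-- The firing relation of a Petri net: `m -t→ m'` iff `W(p,t) ≤ m(p)` and
`m'(p) = m(p) - W(p,t) + W(t,p)` for all places `p`. -/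
def PetriNet.Fires {P T : Type*} (N : PetriNet P T) (m : P → ℕ) (t : T) (m' : P → ℕ) : Prop :=
  ∀ p, N.pre p t ≤ m p ∧ m' p = m p - N.pre p t + N.post t p

/-- Comparison operators `⋈ ∈ {<, ≤, >, ≥, =, ≠}`. -/
inductive Cmp : Type
  | lt | le | gt | ge | eq | ne

/-- Semantics of the comparison operators. -/
def Cmp.holds : Cmp → ℤ → ℤ → Prop
  | .lt, x, y => x < y
  | .le, x, y => x ≤ y
  | .gt, x, y => x > y
  | .ge, x, y => x ≥ y
  | .eq, x, y => x = y
  | .ne, x, y => x ≠ y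

/-- A linear proposition `k₁·p₁ + ⋯ + kₙ·pₙ ⋈ k`. -/
structure LinProp (P : Type*) where
  coef : P → ℤ
  cmp : Cmp
  const : ℤ

/-- The value of the linear left-hand side of a linear proposition in a marking. -/
def LinProp.value {P : Type*} [Fintype P] (q : LinProp P) (m : P → ℕ) : ℤ :=
  ∑ p, q.coef p * (m p : ℤ)

/-- Satisfaction of a linear proposition in a marking. -/
def LinProp.sat {P : Type*} [Fintype P] (q : LinProp P) (m : P → ℕ) : Prop :=
  q.cmp.holds (q.value m) q.const

/-- A polynomial proposition `f(p₁,…,pₙ) ⋈ k`. -/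
structure PolyProp (P : Type*) where
  poly : MvPolynomial P ℤ
  cmp : Cmp
  const : ℤ

/-- The value of the left-hand-side polynomial of a polynomial proposition in a marking. -/
noncomputable def PolyProp.value {P : Type*} (q : PolyProp P) (m : P → ℕ) : ℤ :=
  MvPolynomial.eval (fun p => (m p : ℤ)) q.poly

/-- Satisfaction of a polynomial proposition in a marking. -/
def PolyProp.sat {P : Type*} (q : PolyProp P) (m : P → ℕ) : Prop :=
  q.cmp.holds (q.value m) q.const

/-- Subsequence along a single index. -/
theorem subseq_single {α : Type*} (g : ℕ → Option α) (a : ℕ) :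
    subseq g (fun i => i = a) = fun k => if k = 0 then g a else none := by
  funext k
  have h1 : ({i | i = a} : Set ℕ) = {a} := by ext; simp
  unfold subseq
  simp only [h1, Set.ncard_singleton, Nat.lt_one_iff]
  by_cases hk : k = 0
  · subst hk
    have hc : Nat.count (fun i => i = a) a = 0 := by
      rw [Nat.count_iff_forall_not]
      intro n hn; omega
    have hn : Nat.nth (fun i => i = a) (Nat.count (fun i => i = a) a) = a :=
      Nat.nth_count rfl
    rw [hc] at hn
    simp [hn]
  · simp [hk]

/-- Every selected value occurs in the subsequence. -/
theorem exists_subseq_eq {α : Type*} (g : ℕ → Option α) (P : ℕ → Prop) (i : ℕ) (hi : P i) :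
    ∃ k, subseq g P k = g i := by
  refine ⟨Nat.count P i, ?_⟩
  unfold subseq
  rw [if_pos, Nat.nth_count hi]
  by_cases h : ({i | P i} : Set ℕ).Infinite
  · exact Or.inl h
  · right
    have hf : ({i | P i} : Set ℕ).Finite := Set.not_infinite.mp h
    have := Nat.count_lt_card hf hi
    exact this.trans_eq (Set.ncard_eq_toFinset_card _ hf).symm

/-- Place `false` is `x`, place `true` is `c`; transition `false` (`t`) tests `c` and
increments `x`, transition `true` (`u`) consumes `c`. -/
def exNet : PetriNet Bool Bool where
  pre p _ := if p then 1 else 0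
  post t _ := if t then 0 else 1
  m0 p := if p then 1 else 0

/-- The proposition `x - x * c = 0`. -/
noncomputable def exProp : PolyProp Bool where
  poly := MvPolynomial.X false - MvPolynomial.X false * MvPolynomial.X true
  cmp := .eq
  const := 0

theorem exProp_value (m : Bool → ℕ) :
    exProp.value m = (m false : ℤ) - (m false : ℤ) * (m true : ℤ) := by
  simp [exProp, PolyProp.value]

theorem exProp_sat (m : Bool → ℕ) :
    exProp.sat m ↔ (m false : ℤ) - (m false : ℤ) * (m true : ℤ) = 0 := by
  rw [← exProp_value]; rfl

theorem exNet_reach (m : Bool → ℕ) (h : Reach exNet.Fires exNet.m0 m) : m true ≤ 1 := by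
  induction h with
  | refl => simp [exNet]
  | @step s a t _ hf ih =>
    have := hf true
    cases a <;> simp [exNet] at this <;> omega

/-- The path `u`. -/
def exP : TPath exNet.Fires where
  states i p := if i = 0 then (if p then 1 else 0) else 0
  acts _ := true
  len := 1
  valid := by
    intro i hi
    have : i < 1 := by exact_mod_cast hi
    obtain rfl : i = 0 := by omega
    intro p; cases p <;> simp [exNet]

/-- The path `t u`. -/
def exQ : TPath exNet.Fires where
  states i p := if p then (if i ≤ 1 then 1 else 0) else (if i = 0 then 0 else 1)
  acts i := if i = 0 then false else true
  len := 2
  valid := by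
    intro i hi
    have : i < 2 := by exact_mod_cast hi
    obtain rfl | rfl : i = 0 ∨ i = 1 := by omega
    · intro p; cases p <;> simp [exNet]
    · intro p; cases p <;> simp [exNet]

/-- The reach value invisible transitions of the example. -/
def exI : Set Bool := {t : Bool | ∀ m m', Reach exNet.Fires exNet.m0 m → exNet.Fires m t m' →
          PolyProp.value exProp m = PolyProp.value exProp m'}

theorem t_mem : false ∈ exI := by
  intro m m' hr hf
  have h1 := exNet_reach m hr
  have h2 := hf true
  simp [exNet] at h2
  have h3 : m true = 1 := by omega
  have h4 : m' true = 1 := by omega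
  simp [exProp_value, h3, h4]

theorem u_not_mem : true ∉ exI := by
  intro h
  have hr : Reach exNet.Fires exNet.m0 (exQ.states 1) := by
    have h0 := exQ.valid 0 (by simp [exQ])
    have h00 : exQ.states 0 = exNet.m0 := by
      funext p; cases p <;> simp [exQ, exNet]
    rw [h00] at h0
    exact Reach.step Reach.refl h0
  have := h _ (exQ.states 2) hr (exQ.valid 1 (by simp [exQ]))
  simp [exProp_value, exQ] at this

/-- Under reach value invisibility, the LSTS underlying a Petri net is not
necessarily labelled consistently for polynomial propositions: there exist a Petri net,
a labelling of its markings by a single polynomial proposition, and two initial paths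
that are weakly equivalent w.r.t. the set of reach value invisible structural
transitions but not stutter equivalent under that labelling. -/
theorem petri_reach_value_invisibility_not_consistent_for_polynomial :
    ∃ (P T : Type) (_ : Fintype P) (_ : Fintype T) (N : PetriNet P T)
      (q0 : PolyProp P) (p q : TPath N.Fires),
      p.states 0 = N.m0 ∧ q.states 0 = N.m0 ∧
      WeakEquiv {t : T | ∀ m m', Reach N.Fires N.m0 m → N.Fires m t m' →
          PolyProp.value q0 m = PolyProp.value q0 m'} p q ∧
      ¬ StutterEquiv (fun m => {qp ∈ ({q0} : Set (PolyProp P)) | qp.sat m})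
          (fun m => {qp ∈ ({q0} : Set (PolyProp P)) | qp.sat m}) p q := by
  refine ⟨Bool, Bool, inferInstance, inferInstance, exNet, exProp, exP, exQ, ?_, ?_, ?_, ?_⟩
  · funext p; cases p <;> simp [exP, exNet]
  · funext p; cases p <;> simp [exQ, exNet]
  · change WeakEquiv exI exP exQ
    refine ⟨by simp [exP, exQ], ?_⟩
    have h1 : (fun i : ℕ => (i : ℕ∞) < exP.len ∧ exP.acts i ∉ exI) = fun i => i = 0 := by
      funext i
      simp [exP, u_not_mem]
    have h2 : (fun i : ℕ => (i : ℕ∞) < exQ.len ∧ exQ.acts i ∉ exI) = fun i => i = 1 := by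
      funext i
      have : ((i : ℕ∞) < 2) ↔ i < 2 := by exact_mod_cast Iff.rfl
      by_cases hi : i = 0
      · simp [exQ, hi, t_mem]
      · simp only [exQ, hi, if_false, this, u_not_mem, not_false_iff, and_true, eq_iff_iff]
        omega
    rw [h1, h2, subseq_single, subseq_single]
    simp [TPath.actSeq, exP, exQ]
  · rintro ⟨-, h⟩
    set L : (Bool → ℕ) → Set (PolyProp Bool) :=
      fun m => {qp ∈ ({exProp} : Set (PolyProp Bool)) | qp.sat m} with hL
    have hE : ∀ m, exProp.sat m → exProp ∈ L m := fun m hm => ⟨rfl, hm⟩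
    have hN : ∀ m, ¬ exProp.sat m → L m = ∅ := by
      intro m hm
      ext x
      simp only [hL, Set.mem_ofPred_eq, Set.mem_singleton_iff, Set.mem_empty_iff_false, iff_false]
      rintro ⟨rfl, hx⟩
      exact hm hx
    have hq2 : exQ.labelSeq L 2 = some ∅ := by
      have : L (exQ.states 2) = ∅ := hN _ (by simp [exProp_sat, exQ])
      simp only [TPath.labelSeq, this]
      simp [exQ]
    have hq1 : exQ.labelSeq L 1 ≠ some ∅ := by
      have : exProp ∈ L (exQ.states 1) := hE _ (by simp [exProp_sat, exQ])
      unfold TPath.labelSeq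
      split_ifs
      · intro hh
        rw [Option.some.inj hh] at this
        exact this
      · simp
    have hp : ∀ i, exP.labelSeq L i ≠ some ∅ := by
      intro i
      have : exProp ∈ L (exP.states i) := hE _ (by simp [exProp_sat, exP])
      unfold TPath.labelSeq
      split_ifs
      · intro hh
        rw [Option.some.inj hh] at this
        exact this
      · simp
    obtain ⟨k, hk⟩ := exists_subseq_eq (exQ.labelSeq L)
      (fun i => (exQ.labelSeq L i).isSome ∧ (i = 0 ∨ exQ.labelSeq L i ≠ exQ.labelSeq L (i - 1))) 2
      ⟨by simp [hq2], Or.inr (by rw [hq2]; exact hq1.symm)⟩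
    have hk' : nsTrace (exP.labelSeq L) k = some ∅ := by
      rw [h, ← hq2]; exact hk
    unfold nsTrace subseq at hk'
    split_ifs at hk'
    exact hp _ hk'
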